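/- Let 𝒰 be a subcritical two-dimensional update family, i.e. every semicircle of S¹ has infinite intersection with 𝒮(𝒰). Then liminf_{n→∞} p_c(ℤ²_n, 𝒰) > 0. -/

import Mathlib

/-!
A multi-scale argument shows that, for small `p`, a `p`-random subset of the torus is
with probability more than one half contained in a proper closed set, uniformly in `n`.

*Stable directions.* Subcriticality and compactness of the circle give finitely many stable
directions `u`, each of them orthogonal to no site of a rule, such that
`κ * ‖z‖ ≤ max ⟨z, u⟩` for all `z`. Every rule contains, for each of these `u`, a site in the cone
`{z | e * ‖z‖ ≤ ⟨z, u⟩}` (`exists_directions`). Hence an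
intersection of regions, one for each `u`, such that the region of `u` is closed under subtracting
the vectors of the cone of `u`, is closed under the dynamics.

*Droplets.* Replacing the cone of slope `e` by a slightly narrower one leaves room to bend the
boundary of such a region around a sparse collection of obstacles (`barrier`). Spending the
slope as `e / 2 ^ k` at scale `k` allows infinitely many scales, and produces a laminar family of
bounded droplets around islands of all levels (`exists_droplets`). Their union is closed
under the dynamics and is not everything (`exists_closed`).

*Sparse sets.* Fix scales `α_k`, `β_k` with `β_k = L * 2 ^ k * α_k` and `α_(k+1) = 4 * β_k`.
All points of a set `A` survive to level `0`, and a survivor of level `k` survives to level `k + 1` if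
another survivor of level `k` lies at distance in `(α_k, β_k]` from it; the points that are lost at
this step form islands of diameter at most `α_k` that are `β_k`-separated. If nothing survives to
level `K`, the droplet construction applies
(`exists_scales`). Survival to level `K` forces a binary tree of `2 ^ K` distinct points
of `A` (`exists_tree`).

*Probability.* The number of these trees rooted at a given point is `W ^ O(2 ^ K)`, because
`log β_k` grows only quadratically in `k`. Taking the largest `K` with `α_K < n`, a union bound over
trees and roots shows that the probability of percolation is less than one half once `p` is at most an
explicit constant which depends on the family only (`percProb_lt`), and this constant bounds
the critical probability from below for every large `n`.
-/

open scoped BigOperators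

/-- Points of the plane lattice ℤ². -/
abbrev Pt : Type := ℤ × ℤ

noncomputable section

/-- Inner product of an integer point with a real vector. -/
def dotIR (x : Pt) (u : ℝ × ℝ) : ℝ := (x.1 : ℝ) * u.1 + (x.2 : ℝ) * u.2

/-- Inner product of two real vectors. -/
def dotRR (u v : ℝ × ℝ) : ℝ := u.1 * v.1 + u.2 * v.2

/-- The unit circle S¹ ⊆ ℝ². -/
def unitCircle : Set (ℝ × ℝ) := {u | u.1 ^ 2 + u.2 ^ 2 = 1}

/-- The discrete half-plane H_u = {x ∈ ℤ² : ⟨x,u⟩ < 0}. -/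
def halfPlane (u : ℝ × ℝ) : Set Pt := {x | dotIR x u < 0}

/-- An update family: a finite nonempty family of finite subsets of ℤ²∖{0}. -/
def UpdateFamily (𝒰 : Finset (Finset Pt)) : Prop :=
  𝒰.Nonempty ∧ ∀ X ∈ 𝒰, (0 : Pt) ∉ X

/-- One step of 𝒰-bootstrap percolation. -/
def bootStep (𝒰 : Finset (Finset Pt)) (A : Set Pt) : Set Pt :=
  A ∪ {x : Pt | ∃ X ∈ 𝒰, ∀ v ∈ X, x + v ∈ A}

/-- Iterates of 𝒰-bootstrap percolation. -/
def bootIter (𝒰 : Finset (Finset Pt)) : ℕ → Set Pt → Set Pt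
  | 0, A => A
  | n + 1, A => bootStep 𝒰 (bootIter 𝒰 n A)

/-- The 𝒰-bootstrap closure [A] = ⋃_t A_t. -/
def bootClosure (𝒰 : Finset (Finset Pt)) (A : Set Pt) : Set Pt :=
  ⋃ n : ℕ, bootIter 𝒰 n A

/-- The stable set 𝒮(𝒰) = {u ∈ S¹ : X ⊄ H_u for all X ∈ 𝒰}. -/
def stableSet (𝒰 : Finset (Finset Pt)) : Set (ℝ × ℝ) :=
  {u | u ∈ unitCircle ∧ ∀ X ∈ 𝒰, ¬((X : Set Pt) ⊆ halfPlane u)}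

/-- A rational direction: u = z/‖z‖ for some z ∈ ℤ²∖{0}. -/
def IsRationalDir (u : ℝ × ℝ) : Prop :=
  ∃ z : Pt, z ≠ 0 ∧
    u = ((z.1 : ℝ) / Real.sqrt ((z.1 : ℝ) ^ 2 + (z.2 : ℝ) ^ 2),
         (z.2 : ℝ) / Real.sqrt ((z.1 : ℝ) ^ 2 + (z.2 : ℝ) ^ 2))

/-- Critical family: some (closed) semicircle meets 𝒮(𝒰) in a finite set and every open
semicircle meets 𝒮(𝒰). -/
def Critical (𝒰 : Finset (Finset Pt)) : Prop :=
  (∃ u ∈ unitCircle, (stableSet 𝒰 ∩ {w | 0 ≤ dotRR u w}).Finite) ∧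
  ∀ u ∈ unitCircle, (stableSet 𝒰 ∩ {w | 0 < dotRR u w}).Nonempty

/-- Supercritical family: some open semicircle is disjoint from 𝒮(𝒰). -/
def Supercritical (𝒰 : Finset (Finset Pt)) : Prop :=
  ∃ u ∈ unitCircle, stableSet 𝒰 ∩ {w | 0 < dotRR u w} = ∅

/-- Subcritical family: every semicircle has infinite intersection with 𝒮(𝒰). -/
def Subcritical (𝒰 : Finset (Finset Pt)) : Prop :=
  ∀ u ∈ unitCircle, (stableSet 𝒰 ∩ {w | 0 ≤ dotRR u w}).Infinite

/-- The translated half-plane H_u + a. -/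
def translHalfPlane (u : ℝ × ℝ) (a : Pt) : Set Pt := {x | dotIR (x - a) u < 0}

/-- A 𝒯-droplet: a nonempty intersection ⋂_{u ∈ 𝒯} (H_u + a_u). -/
def IsDroplet (𝒯 : Finset (ℝ × ℝ)) (D : Set Pt) : Prop :=
  D.Nonempty ∧ ∃ a : (ℝ × ℝ) → Pt, D = ⋂ u ∈ 𝒯, translHalfPlane u (a u)

/-- Euclidean distance between two lattice points. -/
def edist2 (x y : Pt) : ℝ :=
  Real.sqrt (((x.1 : ℝ) - (y.1 : ℝ)) ^ 2 + ((x.2 : ℝ) - (y.2 : ℝ)) ^ 2)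

/-- Diameter of a set of lattice points (w.r.t. the Euclidean distance). -/
def diam (D : Set Pt) : ℝ :=
  sSup {d : ℝ | ∃ x ∈ D, ∃ y ∈ D, d = edist2 x y}

/-- Translate of a set of lattice points. -/
def translatePt (a : Pt) (D : Set Pt) : Set Pt := (fun x => a + x) '' D

/-- The initial collection of the covering algorithm: one copy of D̂ per element of A. -/
def initColl (Dhat : Set Pt) (A : Finset Pt) : Multiset (Set Pt) :=
  A.val.map (fun a => translatePt a Dhat)

/-- Two sets lie within Euclidean distance κ of each other. -/
def DropletsClose (κ : ℝ) (D E : Set Pt) : Prop :=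
  ∃ x ∈ D, ∃ y ∈ E, edist2 x y ≤ κ

/-- D is the smallest 𝒯-droplet containing S. -/
def SmallestDroplet (𝒯 : Finset (ℝ × ℝ)) (S : Set Pt) (D : Set Pt) : Prop :=
  IsDroplet 𝒯 D ∧ S ⊆ D ∧ ∀ D' : Set Pt, IsDroplet 𝒯 D' → S ⊆ D' → D ⊆ D'

/-- One merging step of the covering algorithm. -/
def MergeStep (κ : ℝ) (𝒯 : Finset (ℝ × ℝ)) (C C' : Multiset (Set Pt)) : Prop :=
  ∃ (D₁ D₂ D₃ : Set Pt) (C₀ : Multiset (Set Pt)),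
    C = D₁ ::ₘ D₂ ::ₘ C₀ ∧ DropletsClose κ D₁ D₂ ∧
    SmallestDroplet 𝒯 (D₁ ∪ D₂) D₃ ∧ C' = D₃ ::ₘ C₀

/-- A terminal collection: all pairwise distances exceed κ. -/
def TerminalColl (κ : ℝ) (C : Multiset (Set Pt)) : Prop :=
  ∀ (D₁ D₂ : Set Pt) (C₀ : Multiset (Set Pt)),
    C = D₁ ::ₘ D₂ ::ₘ C₀ → ¬ DropletsClose κ D₁ D₂

/-- D̂ is a valid base droplet for the covering algorithm with parameter κ:
a finite 𝒯-droplet containing 0 with κ/2 ≤ diam(D̂) ≤ κ. -/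
def GoodBase (κ : ℝ) (𝒯 : Finset (ℝ × ℝ)) (Dhat : Set Pt) : Prop :=
  IsDroplet 𝒯 Dhat ∧ Dhat.Finite ∧ (0 : Pt) ∈ Dhat ∧ κ / 2 ≤ diam Dhat ∧ diam Dhat ≤ κ

/-- The collection C is reachable by the covering algorithm started from A. -/
def Reachable (κ : ℝ) (𝒯 : Finset (ℝ × ℝ)) (Dhat : Set Pt) (A : Finset Pt)
    (C : Multiset (Set Pt)) : Prop :=
  Relation.ReflTransGen (MergeStep κ 𝒯) (initColl Dhat A) C

/-- A droplet is covered by A if it belongs to some collection arising during some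
execution of the covering algorithm. -/
def CoveredBy (κ : ℝ) (𝒯 : Finset (ℝ × ℝ)) (Dhat : Set Pt) (A : Finset Pt)
    (D : Set Pt) : Prop :=
  ∃ C : Multiset (Set Pt), Reachable κ 𝒯 Dhat A C ∧ D ∈ C

/-- The lattice line l_y = {x ∈ ℤ² : ⟨x,y⟩ = 0}. -/
def lineLat (y : ℝ × ℝ) : Set Pt := {x | dotIR x y = 0}

/-- w generates the rank-one lattice l_y. -/
def GeneratesLine (w : Pt) (y : ℝ × ℝ) : Prop :=
  lineLat y = Set.range (fun k : ℤ => ((k * w.1, k * w.2) : Pt))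

/-- The segment Y = {z₀ + j·w : 0 ≤ j < L} of L consecutive points of l_y. -/
def segmentY (z₀ w : Pt) (L : ℕ) : Finset Pt :=
  (Finset.range L).image (fun j : ℕ => ((z₀.1 + (j : ℤ) * w.1, z₀.2 + (j : ℤ) * w.2) : Pt))

open Classical in
/-- The configuration of ℤ² determined by η ∈ {+,−}^Y: state − (false) on H_y, the values of η
on Y, and + (true) elsewhere. -/
def sigmaCfg (y : ℝ × ℝ) (Y : Finset Pt) (η : Pt → Bool) (x : Pt) : Bool :=
  if x ∈ halfPlane y then false else if x ∈ Y then η x else true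

/-- r_v(η): the number of rules X ∈ 𝒰 such that every point of v + X has state opposite
to that of v (in the configuration σ_η). -/
def rval (𝒰 : Finset (Finset Pt)) (y : ℝ × ℝ) (Y : Finset Pt) (η : Pt → Bool) (v : Pt) : ℕ :=
  {X : Finset Pt | X ∈ 𝒰 ∧ ∀ p ∈ X, sigmaCfg y Y η (v + p) = !(sigmaCfg y Y η v)}.ncard

/-- η with the state at v flipped. -/
def flipAt (η : Pt → Bool) (v : Pt) : Pt → Bool := fun x => if x = v then !(η x) else η x

/-- The generator 𝕍 of the restricted 1-dimensional 𝒰-voter dynamics on Y. -/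
def genV (𝒰 : Finset (Finset Pt)) (y : ℝ × ℝ) (Y : Finset Pt)
    (g : (Pt → Bool) → ℝ) (η : Pt → Bool) : ℝ :=
  ∑ v ∈ Y, ((rval 𝒰 y Y η v : ℝ) / (𝒰.card : ℝ)) * (g (flipAt η v) - g η)

/-- The natural projection ℤ² → ℤ²_n. -/
def torusProj (n : ℕ) (v : Pt) : ZMod n × ZMod n := ((v.1 : ZMod n), (v.2 : ZMod n))

/-- One step of 𝒰-bootstrap percolation on the torus ℤ²_n. -/
def torusStep (n : ℕ) (𝒰 : Finset (Finset Pt)) (A : Set (ZMod n × ZMod n)) :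
    Set (ZMod n × ZMod n) :=
  A ∪ {x | ∃ X ∈ 𝒰, ∀ v ∈ X, x + torusProj n v ∈ A}

/-- Iterates of 𝒰-bootstrap percolation on the torus. -/
def torusIter (n : ℕ) (𝒰 : Finset (Finset Pt)) :
    ℕ → Set (ZMod n × ZMod n) → Set (ZMod n × ZMod n)
  | 0, A => A
  | t + 1, A => torusStep n 𝒰 (torusIter n 𝒰 t A)

/-- The 𝒰-bootstrap closure on the torus. -/
def torusClosure (n : ℕ) (𝒰 : Finset (Finset Pt)) (A : Set (ZMod n × ZMod n)) :
    Set (ZMod n × ZMod n) :=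
  ⋃ t : ℕ, torusIter n 𝒰 t A

open Classical in
/-- ℙ_p([A] = ℤ²_n) for a p-random subset A of ℤ²_n (Bernoulli product measure written as
a finite sum over configurations). -/
def percProb (n : ℕ) (𝒰 : Finset (Finset Pt)) (p : ℝ) : ℝ :=
  if h : n = 0 then 0 else
    haveI : NeZero n := ⟨h⟩
    ∑ ω : ZMod n × ZMod n → Bool,
      (if torusClosure n 𝒰 {x | ω x = true} = Set.univ then (1 : ℝ) else 0) *
        p ^ (Finset.univ.filter (fun x => ω x = true)).card *
        (1 - p) ^ (Finset.univ.filter (fun x => ω x = false)).card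

/-- The critical probability p_c(ℤ²_n, 𝒰). -/
def pCrit (n : ℕ) (𝒰 : Finset (Finset Pt)) : ℝ :=
  sInf {p : ℝ | p ∈ Set.Icc (0 : ℝ) 1 ∧ 1 / 2 ≤ percProb n 𝒰 p}

/-- The point of S¹ at angle θ. -/
def circlePt (θ : ℝ) : ℝ × ℝ := (Real.cos θ, Real.sin θ)

end


/-! ### Stable directions -/

theorem exists_pos_le_of_finset {β : Type*} (s : Finset β) (f : β → ℝ) (hf : ∀ x ∈ s, 0 < f x) :
    ∃ κ : ℝ, 0 < κ ∧ κ ≤ 1 ∧ ∀ x ∈ s, κ ≤ f x := by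
  classical
  induction s using Finset.induction_on with
  | empty => exact ⟨1, one_pos, le_rfl, by simp⟩
  | insert a s _ ih =>
    obtain ⟨κ, h0, h1, h⟩ := ih fun x hx => hf x (Finset.mem_insert_of_mem hx)
    refine ⟨min κ (f a), lt_min h0 (hf a (Finset.mem_insert_self _ _)),
      (min_le_left _ _).trans h1, fun x hx => ?_⟩
    rcases Finset.mem_insert.1 hx with rfl | hx
    · exact min_le_right _ _
    · exact (min_le_left _ _).trans (h x hx)

theorem pt_norm (z : Pt) : ‖z‖ = max |(z.1 : ℝ)| |(z.2 : ℝ)| := by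
  rw [Prod.norm_def, Int.norm_eq_abs, Int.norm_eq_abs]

theorem finite_perp (a b : ℝ) (h : a ≠ 0 ∨ b ≠ 0) :
    {u : ℝ × ℝ | u ∈ unitCircle ∧ a * u.1 + b * u.2 = 0}.Finite := by
  have hpos : 0 < a ^ 2 + b ^ 2 := by
    rcases h with h | h <;> positivity
  set s := Real.sqrt (a ^ 2 + b ^ 2) with hs
  have hs0 : 0 < s := Real.sqrt_pos.2 hpos
  have hss : s ^ 2 = a ^ 2 + b ^ 2 := Real.sq_sqrt hpos.le
  refine Set.Finite.subset (Set.toFinite ({(-b / s, a / s), (b / s, -a / s)} : Set (ℝ × ℝ))) ?_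
  rintro ⟨x, y⟩ ⟨h1, h2⟩
  simp only [unitCircle, Set.mem_ofPred_eq] at h1 h2
  -- the component of `u` along `(-b, a)` is `±s`
  have ht : (a * y - b * x) ^ 2 = s ^ 2 := by
    rw [hss]
    linear_combination (a ^ 2 + b ^ 2) * h1 - (a * x + b * y) * h2
  have hx : (a ^ 2 + b ^ 2) * x = -b * (a * y - b * x) := by linear_combination a * h2
  have hy : (a ^ 2 + b ^ 2) * y = a * (a * y - b * x) := by linear_combination b * h2
  rw [← hss] at hx hy
  rcases sq_eq_sq_iff_eq_or_eq_neg.1 ht with h | h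
  · left
    rw [h] at hx hy
    ext
    · field_simp; nlinarith
    · field_simp; nlinarith
  · right
    rw [h] at hx hy
    simp only [Set.mem_singleton_iff]
    ext
    · field_simp; nlinarith
    · field_simp; nlinarith

/-- Every open semicircle contains a stable direction that is orthogonal to no site of any rule:
only finitely many directions of the (infinite) stable part of the closed semicircle are lost. -/
theorem exists_stable_dir (𝒰 : Finset (Finset Pt)) (hU : UpdateFamily 𝒰) (hsub : Subcritical 𝒰)
    (w : ℝ × ℝ) (hw : w ∈ unitCircle) :
    ∃ u ∈ stableSet 𝒰, 0 < dotRR u w ∧ ∀ X ∈ 𝒰, ∀ v ∈ X, dotIR v u ≠ 0 := by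
  have hinf := hsub w hw
  have hfin : ({u : ℝ × ℝ | u ∈ unitCircle ∧ w.1 * u.1 + w.2 * u.2 = 0} ∪
      ⋃ X ∈ 𝒰, ⋃ v ∈ X, {u : ℝ × ℝ | u ∈ unitCircle ∧ (v.1 : ℝ) * u.1 + (v.2 : ℝ) * u.2 = 0}).Finite := by
    refine Set.Finite.union (finite_perp _ _ ?_) ?_
    · by_contra! hc
      have := hw
      simp [unitCircle, hc.1, hc.2] at this
    · refine Set.Finite.biUnion 𝒰.finite_toSet fun X hX => ?_
      refine Set.Finite.biUnion X.finite_toSet fun v hv => finite_perp _ _ ?_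
      by_contra! hc
      have h0 : v = 0 := by
        ext
        · exact_mod_cast hc.1
        · exact_mod_cast hc.2
      exact hU.2 X hX (h0 ▸ hv)
  obtain ⟨u, hu, hnu⟩ := (hinf.sdiff hfin).nonempty
  refine ⟨u, hu.1, ?_, fun X hX v hv h0 => hnu ?_⟩
  · have h1 : 0 ≤ dotRR w u := hu.2
    have h2 : dotRR w u ≠ 0 := fun h0 => hnu (Or.inl ⟨hu.1.1, h0⟩)
    have h3 : dotRR u w = dotRR w u := by simp only [dotRR]; ring
    rw [h3]
    exact lt_of_le_of_ne h1 h2.symm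
  · right
    simp only [Set.mem_iUnion]
    exact ⟨X, hX, v, hv, hu.1.1, h0⟩

/-- The only consequence of subcriticality that is used: finitely many directions `u` that
positively span the plane, such that every rule has, for each of them, a site well inside the
half-plane opposite to `H_u`. -/
theorem exists_directions (𝒰 : Finset (Finset Pt)) (hU : UpdateFamily 𝒰) (hsub : Subcritical 𝒰) :
    ∃ (Us : Finset (ℝ × ℝ)) (κ e : ℝ), 0 < κ ∧ 0 < e ∧ e ≤ 1 ∧
      (∀ u ∈ Us, |u.1| ≤ 1 ∧ |u.2| ≤ 1) ∧
      (∀ z : Pt, ∃ u ∈ Us, κ * ‖z‖ ≤ dotIR z u) ∧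
      (∀ u ∈ Us, ∀ X ∈ 𝒰, ∃ v ∈ X, e * ‖v‖ ≤ dotIR v u) := by
  classical
  choose! d hd1 hd2 hd3 using exists_stable_dir 𝒰 hU hsub
  have hcont : ∀ u : ℝ × ℝ, Continuous fun w => dotRR u w := fun u => by
    unfold dotRR; fun_prop
  have hcomp : IsCompact unitCircle := by
    refine Metric.isCompact_of_isClosed_isBounded ?_ ?_
    · exact isClosed_eq (by fun_prop) continuous_const
    · refine (Metric.isBounded_closedBall (x := (0 : ℝ × ℝ)) (r := 1)).subset fun u hu => ?_
      simp only [unitCircle, Set.mem_ofPred_eq] at hu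
      rw [mem_closedBall_zero_iff, Prod.norm_def, Real.norm_eq_abs, Real.norm_eq_abs]
      refine max_le (abs_le_one_iff_mul_self_le_one.2 ?_) (abs_le_one_iff_mul_self_le_one.2 ?_) <;>
        nlinarith [sq_nonneg u.1, sq_nonneg u.2]
  obtain ⟨t, ht, hcov⟩ := hcomp.elim_nhds_subcover
    (fun w => {x | dotRR (d w) w / 2 < dotRR (d w) x})
    (fun w hw => (isOpen_lt continuous_const (hcont _)).mem_nhds (by
      have := hd2 w hw
      simp only [Set.mem_ofPred_eq]; linarith))
  obtain ⟨κ, hκ0, -, hκ⟩ := exists_pos_le_of_finset t (fun w => dotRR (d w) w / 2)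
    (fun w hw => half_pos (hd2 w (ht w hw)))
  have hpos : ∀ w ∈ t, ∀ X ∈ 𝒰, ∃ v ∈ X, 0 < dotIR v (d w) := by
    intro w hw X hX
    have h1 := (hd1 w (ht w hw)).2 X hX
    obtain ⟨v, hv, hnv⟩ := Set.not_subset.1 h1
    refine ⟨v, hv, lt_of_le_of_ne (not_lt.1 hnv) (hd3 w (ht w hw) X hX v hv).symm⟩
  choose! g hg1 hg2 using hpos
  obtain ⟨e, he0, he1, he⟩ := exists_pos_le_of_finset (t ×ˢ 𝒰)
    (fun q => dotIR (g q.1 q.2) (d q.1) / (‖g q.1 q.2‖ + 1)) (fun q hq => by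
      rw [Finset.mem_product] at hq
      exact div_pos (hg2 _ hq.1 _ hq.2) (by positivity))
  refine ⟨t.image d, κ, e, hκ0, he0, he1, ?_, ?_, ?_⟩
  · intro u hu
    obtain ⟨w, hw, rfl⟩ := Finset.mem_image.1 hu
    have h1 : d w ∈ unitCircle := (hd1 w (ht w hw)).1
    simp only [unitCircle, Set.mem_ofPred_eq] at h1
    constructor <;> refine abs_le_one_iff_mul_self_le_one.2 ?_ <;>
        nlinarith [sq_nonneg (d w).1, sq_nonneg (d w).2]
  · intro z
    by_cases hz : z = 0
    · subst hz
      have h1 : ((1, 0) : ℝ × ℝ) ∈ unitCircle := by simp [unitCircle]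
      obtain ⟨w, hw⟩ := Set.mem_iUnion.1 (hcov h1)
      simp only [Set.mem_iUnion] at hw
      obtain ⟨hw, -⟩ := hw
      exact ⟨d w, Finset.mem_image_of_mem _ hw, by simp [dotIR]⟩
    · have hpos : 0 < (z.1 : ℝ) ^ 2 + (z.2 : ℝ) ^ 2 := by
        by_contra hc
        refine hz (Prod.ext ?_ ?_)
        · have : (z.1 : ℝ) = 0 := by nlinarith [sq_nonneg (z.1 : ℝ), sq_nonneg (z.2 : ℝ)]
          exact_mod_cast this
        · have : (z.2 : ℝ) = 0 := by nlinarith [sq_nonneg (z.1 : ℝ), sq_nonneg (z.2 : ℝ)]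
          exact_mod_cast this
      set s := Real.sqrt ((z.1 : ℝ) ^ 2 + (z.2 : ℝ) ^ 2) with hs
      have hs0 : 0 < s := Real.sqrt_pos.2 hpos
      have hss : s ^ 2 = (z.1 : ℝ) ^ 2 + (z.2 : ℝ) ^ 2 := Real.sq_sqrt hpos.le
      have h1 : (((z.1 : ℝ) / s, (z.2 : ℝ) / s) : ℝ × ℝ) ∈ unitCircle := by
        simp only [unitCircle, Set.mem_ofPred_eq]
        field_simp
        exact hss.symm
      obtain ⟨w, hw⟩ := Set.mem_iUnion.1 (hcov h1)
      simp only [Set.mem_iUnion] at hw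
      obtain ⟨hw, hlt⟩ := hw
      refine ⟨d w, Finset.mem_image_of_mem _ hw, ?_⟩
      have h2 := hκ w hw
      simp only [Set.mem_ofPred_eq, dotRR] at hlt h2
      have h3 : κ ≤ dotIR z (d w) / s := by
        have : dotIR z (d w) / s = (d w).1 * ((z.1 : ℝ) / s) + (d w).2 * ((z.2 : ℝ) / s) := by
          simp only [dotIR]; ring
        rw [this]; exact h2.trans hlt.le
      rw [le_div_iff₀ hs0] at h3
      have h4 : ‖z‖ ≤ s := by
        rw [pt_norm]
        refine max_le ?_ ?_ <;> refine Real.abs_le_sqrt ?_ <;> nlinarith [sq_nonneg (z.1 : ℝ), sq_nonneg (z.2 : ℝ)]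
      exact (mul_le_mul_of_nonneg_left h4 hκ0.le).trans h3
  · intro u hu X hX
    obtain ⟨w, hw, rfl⟩ := Finset.mem_image.1 hu
    refine ⟨g w X, hg1 w hw X hX, ?_⟩
    have h1 := he (w, X) (Finset.mk_mem_product hw hX)
    simp only at h1
    rw [le_div_iff₀ (by positivity)] at h1
    nlinarith


/-! ### Barriers -/

theorem dotIR_sub (x y : Pt) (u : ℝ × ℝ) : dotIR (x - y) u = dotIR x u - dotIR y u := by
  simp only [dotIR, Prod.fst_sub, Prod.snd_sub]; push_cast; ring

theorem dotIR_le (x : Pt) {u : ℝ × ℝ} (hu : |u.1| ≤ 1 ∧ |u.2| ≤ 1) : |dotIR x u| ≤ 2 * ‖x‖ := by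
  have h1 : |(x.1 : ℝ)| ≤ ‖x‖ := by rw [pt_norm]; exact le_max_left _ _
  have h2 : |(x.2 : ℝ)| ≤ ‖x‖ := by rw [pt_norm]; exact le_max_right _ _
  calc |dotIR x u| ≤ |(x.1 : ℝ) * u.1| + |(x.2 : ℝ) * u.2| := abs_add_le _ _
    _ = |(x.1 : ℝ)| * |u.1| + |(x.2 : ℝ)| * |u.2| := by rw [abs_mul, abs_mul]
    _ ≤ ‖x‖ * 1 + ‖x‖ * 1 := by gcongr <;> tauto
    _ = 2 * ‖x‖ := by ring

/-- `H` is a lower set for the cone `{z | ε‖z‖ ≤ ⟨z,u⟩}`. For `ε = 0` these are half-planes; for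
`ε > 0` they are the regions below the graph of a Lipschitz function over the line orthogonal to
`u`, of slope growing with `ε`. -/
def ConeLower (u : ℝ × ℝ) (ε : ℝ) (H : Set Pt) : Prop :=
  ∀ x ∈ H, ∀ y : Pt, ε * ‖x - y‖ ≤ dotIR (x - y) u → y ∈ H

/-- A cone-lower set `H` can be enlarged by at most `h k`, giving up some slope, so that its
boundary avoids the `ρ`-neighbourhoods of all the obstacles `τ j c` of levels `j < k`. Obstacles
of the highest level that come too close to `H` are swallowed, together with the cones below them;
the separation of same-level obstacles makes these modifications local. Then lower levels are
treated in the same way. -/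
theorem barrier {u : ℝ × ℝ} (hu : |u.1| ≤ 1 ∧ |u.2| ≤ 1) (C : ℕ → Set Pt) (τ : ℕ → Pt → Set Pt)
    (a b h M ε : ℕ → ℝ) (ρ : ℝ) (hρ : 0 ≤ ρ) (ha0 : ∀ k, 0 ≤ a k) (hh : ∀ k, 0 ≤ h k) (hε1 : ∀ k, 0 ≤ ε k ∧ ε k ≤ 1)
    (hεm : ∀ k, ε (k + 1) < ε k) (hM0 : ∀ k, 0 ≤ M k)
    (hM : ∀ k, 3 * (h k + ρ + a k) ≤ (ε k - ε (k + 1)) * M k)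
    (hstep : ∀ k, h k + M k + (h k + ρ + a k) ≤ h (k + 1))
    (hb : ∀ k, h k + ρ + M k ≤ b k) :
    ∀ k, (∀ j < k, ∀ c ∈ C j, ∀ s ∈ τ j c, ∀ t ∈ τ j c, ‖s - t‖ ≤ a j) →
      (∀ j < k, ∀ c ∈ C j, ∀ c' ∈ C j, c ≠ c' → ∀ s ∈ τ j c, ∀ t ∈ τ j c', b j < ‖s - t‖) →
      ∀ H, ConeLower u (ε k) H → ∃ G, H ⊆ G ∧ ConeLower u (ε 0) G ∧
        (∀ x ∈ G, ∃ y ∈ H, ‖x - y‖ ≤ h k) ∧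
        ∀ j < k, ∀ c ∈ C j, τ j c ⊆ G ∨ ∀ t ∈ τ j c, ∀ g ∈ G, ρ < ‖t - g‖ := by
  intro k
  induction k with
  | zero =>
    intro _ _ H hH
    exact ⟨H, subset_rfl, hH, fun x hx => ⟨x, hx, by simpa using hh 0⟩, by simp⟩
  | succ k ih =>
    intro ha hsep H hH
    set m := h k + ρ with hm
    have ha' := ha k (Nat.lt_succ_self k)
    have hsep' := hsep k (Nat.lt_succ_self k)
    set touched : Pt → Prop := fun c => c ∈ C k ∧ ∃ t ∈ τ k c, ∃ y ∈ H, ‖t - y‖ ≤ m with htd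
    set H' : Set Pt := H ∪ {x | ∃ c, touched c ∧ ∃ t ∈ τ k c,
      ε k * ‖t - x‖ ≤ dotIR (t - x) u} with hH'
    -- new points are close to the swallowed obstacle and to `H`
    have hnew : ∀ x ∈ H', x ∉ H → ∃ c, touched c ∧ ∃ t ∈ τ k c, ‖t - x‖ ≤ M k ∧
        ∃ y ∈ H, ‖x - y‖ ≤ M k + (m + a k) := by
      rintro x (hx | ⟨c, hc, t, ht, hz⟩) hxH
      · exact absurd hx hxH
      obtain ⟨hcC, t0, ht0, y, hy, hty⟩ := id hc
      have hyt : ‖y - t‖ ≤ m + a k := by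
        have h1 := ha' c hcC t0 ht0 t ht
        calc ‖y - t‖ = ‖(y - t0) + (t0 - t)‖ := by congr 1; abel
          _ ≤ ‖y - t0‖ + ‖t0 - t‖ := norm_add_le _ _
          _ ≤ m + a k := by rw [norm_sub_rev]; gcongr
      have hzM : ‖t - x‖ ≤ M k := by
        by_contra hlt
        push Not at hlt
        refine hxH (hH y hy x ?_)
        have e1 : y - x = (y - t) + (t - x) := by abel
        have h1 : ‖y - x‖ ≤ ‖y - t‖ + ‖t - x‖ := by rw [e1]; exact norm_add_le _ _
        have h2 : dotIR (y - x) u = dotIR (y - t) u + dotIR (t - x) u := by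
          simp only [dotIR_sub]; ring
        have h3 := (abs_le.1 (dotIR_le (y - t) hu)).1
        have h4 := hM k
        have h5 := hε1 (k + 1)
        have h6 := hεm k
        have h7 : (ε k - ε (k + 1)) * M k ≤ (ε k - ε (k + 1)) * ‖t - x‖ := by
          apply mul_le_mul_of_nonneg_left hlt.le; linarith
        have h8 : ε (k + 1) * ‖y - x‖ ≤ ε (k + 1) * (‖y - t‖ + ‖t - x‖) :=
          mul_le_mul_of_nonneg_left h1 h5.1
        have h9 : ε (k + 1) * ‖y - t‖ ≤ 1 * ‖y - t‖ :=
          mul_le_mul_of_nonneg_right h5.2 (norm_nonneg _)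
        rw [h2]
        nlinarith
      refine ⟨c, hc, t, ht, hzM, y, hy, ?_⟩
      calc ‖x - y‖ = ‖(t - x) + (y - t)‖ := by rw [norm_sub_rev]; congr 1; abel
        _ ≤ ‖t - x‖ + ‖y - t‖ := norm_add_le _ _
        _ ≤ _ := by gcongr
    have hlow : ConeLower u (ε k) H' := by
      rintro x (hx | ⟨c, hc, t, ht, hz⟩) y hxy
      · left
        refine hH x hx y (le_trans ?_ hxy)
        exact mul_le_mul_of_nonneg_right (hεm k).le (norm_nonneg _)
      · right
        refine ⟨c, hc, t, ht, ?_⟩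
        have e1 : t - y = (t - x) + (x - y) := by abel
        have h1 : ‖t - y‖ ≤ ‖t - x‖ + ‖x - y‖ := by rw [e1]; exact norm_add_le _ _
        have h2 : dotIR (t - y) u = dotIR (t - x) u + dotIR (x - y) u := by
          simp only [dotIR_sub]; ring
        have h3 := mul_le_mul_of_nonneg_left h1 (hε1 k).1
        rw [h2]; linarith
    obtain ⟨G, hG1, hG2, hG3, hG4⟩ := ih (fun j hj => ha j (hj.trans (Nat.lt_succ_self k)))
      (fun j hj => hsep j (hj.trans (Nat.lt_succ_self k))) H' hlow
    refine ⟨G, Set.subset_union_left.trans hG1, hG2, fun x hx => ?_, fun j hj c hc => ?_⟩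
    · obtain ⟨x', hx', hxx'⟩ := hG3 x hx
      have hst := hstep k
      by_cases hxH : x' ∈ H
      · refine ⟨x', hxH, hxx'.trans ?_⟩
        linarith [hM0 k, ha0 k, hh k]
      · obtain ⟨c, hc, t, ht, -, y, hy, hxy⟩ := hnew x' hx' hxH
        refine ⟨y, hy, ?_⟩
        calc ‖x - y‖ = ‖(x - x') + (x' - y)‖ := by congr 1; abel
          _ ≤ ‖x - x'‖ + ‖x' - y‖ := norm_add_le _ _
          _ ≤ h k + (M k + (m + a k)) := by gcongr
          _ ≤ h (k + 1) := by linarith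
    · rcases Nat.lt_succ_iff_lt_or_eq.1 hj with hj | rfl
      · exact hG4 j hj c hc
      by_cases htc : touched c
      · left
        intro t ht
        refine hG1 (Or.inr ⟨c, htc, t, ht, ?_⟩)
        simp [dotIR]
      · right
        intro t ht g hg
        by_contra hle
        push Not at hle
        obtain ⟨x, hx, hgx⟩ := hG3 g hg
        have htx : ‖t - x‖ ≤ m := by
          calc ‖t - x‖ = ‖(t - g) + (g - x)‖ := by congr 1; abel
            _ ≤ ‖t - g‖ + ‖g - x‖ := norm_add_le _ _
            _ ≤ m := by rw [hm]; linarith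
        by_cases hxH : x ∈ H
        · exact htc ⟨hc, t, ht, x, hxH, htx⟩
        · obtain ⟨c', hc', t', ht', hM', -⟩ := hnew x hx hxH
          have hne : c ≠ c' := fun hcc => htc (hcc ▸ hc')
          have h1 := hsep' c hc c' hc'.1 hne t ht t' ht'
          have h2 : ‖t - t'‖ ≤ m + M j := by
            calc ‖t - t'‖ = ‖(t - x) - (t' - x)‖ := by congr 1; abel
              _ ≤ ‖t - x‖ + ‖t' - x‖ := norm_sub_le _ _
              _ ≤ m + M j := by gcongr
          have h3 := hb j
          linarith


/-! ### Droplets enclosing the islands -/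

/-- Around every island centre `c ∈ C j` there is a droplet `τ j c`, cut out by barriers in the
directions of `Us`, such that the droplets form a laminar family: a droplet of a lower level either
lies inside a given droplet of a higher level or is at distance more than `ρ` from it. -/
theorem exists_droplets (Us : Finset (ℝ × ℝ)) (κ : ℝ) (hκ : 0 < κ)
    (hUs : ∀ u ∈ Us, |u.1| ≤ 1 ∧ |u.2| ≤ 1)
    (hspan : ∀ z : Pt, ∃ u ∈ Us, κ * ‖z‖ ≤ dotIR z u) (C : ℕ → Set Pt)
    (r b h M β ε : ℕ → ℝ) (ρ : ℝ) (hρ : 0 ≤ ρ) (hr0 : ∀ k, 0 ≤ r k) (hh : ∀ k, 0 ≤ h k)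
    (hε1 : ∀ k, 0 ≤ ε k ∧ ε k ≤ 1)
    (hεm : ∀ k, ε (k + 1) < ε k) (hM0 : ∀ k, 0 ≤ M k)
    (hM : ∀ k, 3 * (h k + ρ + 2 * r k) ≤ (ε k - ε (k + 1)) * M k)
    (hstep : ∀ k, h k + M k + (h k + ρ + 2 * r k) ≤ h (k + 1))
    (hb : ∀ k, h k + ρ + M k ≤ b k) (hr : ∀ k, 4 * h k ≤ κ * r k)
    (hβ : ∀ k, b k + 2 * r k ≤ β k)
    (hC : ∀ k, ∀ c ∈ C k, ∀ c' ∈ C k, c ≠ c' → β k < ‖c - c'‖) :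
    ∀ K, ∃ τ : ℕ → Pt → Set Pt, ∀ j < K, ∀ c ∈ C j,
      (∀ x, ‖x - c‖ ≤ h j → x ∈ τ j c) ∧ (∀ x ∈ τ j c, ‖x - c‖ ≤ r j) ∧
      (∃ G : ℝ × ℝ → Set Pt, (∀ u ∈ Us, ConeLower u (ε 0) (G u)) ∧
        τ j c = {x | ∀ u ∈ Us, x ∈ G u}) ∧
      ∀ i < j, ∀ d ∈ C i, τ i d ⊆ τ j c ∨ ∀ t ∈ τ i d, ∀ g ∈ τ j c, ρ < ‖t - g‖ := by
  intro K
  induction K with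
  | zero => exact ⟨fun _ _ => ∅, by simp⟩
  | succ K ih =>
    obtain ⟨τ, hτ⟩ := ih
    have hG : ∀ c : Pt, ∀ u ∈ Us, ∃ G, {z : Pt | dotIR (z - c) u ≤ 2 * h K} ⊆ G ∧
        ConeLower u (ε 0) G ∧
        (∀ x ∈ G, ∃ y ∈ {z : Pt | dotIR (z - c) u ≤ 2 * h K}, ‖x - y‖ ≤ h K) ∧
        ∀ j < K, ∀ c ∈ C j, τ j c ⊆ G ∨ ∀ t ∈ τ j c, ∀ g ∈ G, ρ < ‖t - g‖ := by
      intro c u hu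
      refine barrier (hUs u hu) C τ (fun k => 2 * r k) b h M ε ρ hρ
        (fun k => mul_nonneg zero_le_two (hr0 k)) hh hε1 hεm hM0 hM hstep hb K ?_ ?_ _ ?_
      · intro j hj c hc s hs t ht
        have h1 := (hτ j hj c hc).2.1 s hs
        have h2 := (hτ j hj c hc).2.1 t ht
        calc ‖s - t‖ = ‖(s - c) - (t - c)‖ := by congr 1; abel
          _ ≤ ‖s - c‖ + ‖t - c‖ := norm_sub_le _ _
          _ ≤ 2 * r j := by linarith
      · intro j hj c hc c' hc' hne s hs t ht
        have h1 := (hτ j hj c hc).2.1 s hs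
        have h2 := (hτ j hj c' hc').2.1 t ht
        have h3 := hC j c hc c' hc' hne
        have h4 : ‖c - c'‖ ≤ ‖s - t‖ + (‖s - c‖ + ‖t - c'‖) := by
          calc ‖c - c'‖ = ‖(s - t) - ((s - c) - (t - c'))‖ := by congr 1; abel
            _ ≤ ‖s - t‖ + ‖(s - c) - (t - c')‖ := norm_sub_le _ _
            _ ≤ _ := by gcongr; exact norm_sub_le _ _
        have h5 := hβ j
        linarith
      · intro x hx y hxy
        have h1 : 0 ≤ dotIR (x - y) u := (mul_nonneg (hε1 K).1 (norm_nonneg _)).trans hxy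
        simp only [Set.mem_ofPred_eq, dotIR_sub] at hx h1 ⊢
        linarith
    choose! G hG1 hG2 hG3 hG4 using hG
    refine ⟨fun j => if j = K then fun c => {x | ∀ u ∈ Us, x ∈ G c u} else τ j, ?_⟩
    intro j hj c hc
    rcases Nat.lt_succ_iff_lt_or_eq.1 hj with hj | rfl
    · have hne : j ≠ K := hj.ne
      simp only [if_neg hne]
      obtain ⟨h1, h2, h3, h4⟩ := hτ j hj c hc
      refine ⟨h1, h2, h3, fun i hi d hd => ?_⟩
      rw [if_neg (hi.trans hj).ne]
      exact h4 i hi d hd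
    · simp only [if_true]
      refine ⟨fun x hx u hu => hG1 c u hu ?_, fun x hx => ?_, ⟨G c, hG2 c, rfl⟩, fun i hi d hd => ?_⟩
      · have h1 := (abs_le.1 (dotIR_le (x - c) (hUs u hu))).2
        simp only [Set.mem_ofPred_eq]
        linarith
      · obtain ⟨u, hu, hle⟩ := hspan (x - c)
        obtain ⟨y, hy, hxy⟩ := hG3 c u hu x (hx u hu)
        have h1 := (abs_le.1 (dotIR_le (x - y) (hUs u hu))).2
        simp only [Set.mem_ofPred_eq, dotIR_sub] at hy hle h1
        have h2 := hr j
        have h3 : κ * ‖x - c‖ ≤ κ * r j := by linarith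
        exact le_of_mul_le_mul_left h3 hκ
      · rw [if_neg hi.ne]
        by_cases hall : ∀ u ∈ Us, τ i d ⊆ G c u
        · exact Or.inl fun t ht u hu => hall u hu ht
        · push Not at hall
          obtain ⟨u, hu, hns⟩ := hall
          exact Or.inr fun t ht g hg =>
            ((hG4 c u hu i hi d hd).resolve_left hns) t ht g (hg u hu)

/-- The union of the droplets is closed under the dynamics, and is not the whole plane. -/
theorem exists_closed (𝒰 : Finset (Finset Pt)) (Us : Finset (ℝ × ℝ)) (κ e R : ℝ) (hκ : 0 < κ)
    (hUs : ∀ u ∈ Us, |u.1| ≤ 1 ∧ |u.2| ≤ 1)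
    (hspan : ∀ z : Pt, ∃ u ∈ Us, κ * ‖z‖ ≤ dotIR z u)
    (hrule : ∀ u ∈ Us, ∀ X ∈ 𝒰, ∃ v ∈ X, e * ‖v‖ ≤ dotIR v u)
    (hR1 : 1 ≤ R) (hR : ∀ X ∈ 𝒰, ∀ v ∈ X, ‖v‖ ≤ R) (C : ℕ → Set Pt)
    (r b h M β ε : ℕ → ℝ) (hr0 : ∀ k, 0 ≤ r k) (hh : ∀ k, 0 ≤ h k)
    (hε0 : ε 0 = e) (hε1 : ∀ k, 0 ≤ ε k ∧ ε k ≤ 1)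
    (hεm : ∀ k, ε (k + 1) < ε k) (hM0 : ∀ k, 0 ≤ M k)
    (hM : ∀ k, 3 * (h k + 2 * R + 2 * r k) ≤ (ε k - ε (k + 1)) * M k)
    (hstep : ∀ k, h k + M k + (h k + 2 * R + 2 * r k) ≤ h (k + 1))
    (hb : ∀ k, h k + 2 * R + M k ≤ b k) (hr : ∀ k, 4 * h k ≤ κ * r k)
    (hβ : ∀ k, b k + 2 * r k ≤ β k)
    (hC : ∀ k, ∀ c ∈ C k, ∀ c' ∈ C k, c ≠ c' → β k < ‖c - c'‖) (K : ℕ) :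
    ∃ F : Set Pt, (∀ j < K, ∀ c ∈ C j, ∀ x, ‖x - c‖ ≤ h j → x ∈ F) ∧
      (∀ X ∈ 𝒰, ∀ x, (∀ v ∈ X, x + v ∈ F) → x ∈ F) ∧ F ≠ Set.univ := by
  obtain ⟨τ, hτ⟩ := exists_droplets Us κ hκ hUs hspan C r b h M β ε (2 * R) (by linarith) hr0 hh hε1
    hεm hM0 hM hstep hb hr hβ hC K
  -- a droplet within `2R` of another one of at least its level is contained in it
  have key : ∀ j < K, ∀ c ∈ C j, ∀ i ≤ j, ∀ d ∈ C i, ∀ s ∈ τ i d, ∀ t ∈ τ j c,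
      ‖s - t‖ ≤ 2 * R → s ∈ τ j c := by
    intro j hj c hc i hi d hd s hs t ht hst
    rcases hi.lt_or_eq with hi | rfl
    · rcases (hτ j hj c hc).2.2.2 i hi d hd with h1 | h1
      · exact h1 hs
      · exact absurd (h1 s hs t ht) (not_lt.2 hst)
    · by_cases hdc : d = c
      · exact hdc ▸ hs
      exfalso
      have h1 := hC i d hd c hc hdc
      have h2 := (hτ i hj d hd).2.1 s hs
      have h3 := (hτ i hj c hc).2.1 t ht
      have h4 : ‖d - c‖ ≤ ‖s - t‖ + (‖s - d‖ + ‖t - c‖) := by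
        calc ‖d - c‖ = ‖(s - t) - ((s - d) - (t - c))‖ := by congr 1; abel
          _ ≤ ‖s - t‖ + ‖(s - d) - (t - c)‖ := norm_sub_le _ _
          _ ≤ _ := by gcongr; exact norm_sub_le _ _
      linarith [hb i, hβ i, hh i, hM0 i]
  refine ⟨{x | ∃ j < K, ∃ c ∈ C j, x ∈ τ j c}, fun j hj c hc x hx =>
    ⟨j, hj, c, hc, (hτ j hj c hc).1 x hx⟩, fun X hX x hx => ?_, fun huniv => ?_⟩
  · obtain ⟨u0, hu0, -⟩ := hspan 0
    obtain ⟨v0, hv0, -⟩ := hrule u0 hu0 X hX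
    choose! lv hlv ce hce hmem using hx
    obtain ⟨w, hw, hmax⟩ := X.exists_max_image lv ⟨v0, hv0⟩
    have hin : ∀ v ∈ X, x + v ∈ τ (lv w) (ce w) := by
      intro v hv
      refine key (lv w) (hlv w hw) (ce w) (hce w hw) (lv v) (hmax v hv) (ce v) (hce v hv) _
        (hmem v hv) _ (hmem w hw) ?_
      rw [add_sub_add_left_eq_sub]
      refine (norm_sub_le _ _).trans ?_
      linarith [hR X hX v hv, hR X hX w hw]
    refine ⟨lv w, hlv w hw, ce w, hce w hw, ?_⟩
    obtain ⟨G, hG1, hG2⟩ := (hτ (lv w) (hlv w hw) (ce w) (hce w hw)).2.2.1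
    rw [hG2] at hin ⊢
    intro u hu
    obtain ⟨v, hv, hvu⟩ := hrule u hu X hX
    refine hG1 u hu (x + v) (hin v hv u hu) x ?_
    rwa [add_sub_cancel_left, hε0]
  · -- a droplet of the highest level would be invariant under the translation by `(1, 0)`
    have hall : ∀ x : Pt, ∃ j < K, ∃ c ∈ C j, x ∈ τ j c := fun x => by
      have : x ∈ (Set.univ : Set Pt) := trivial
      rwa [← huniv] at this
    choose lv hlv ce hce hmem using hall
    have hfin : (Set.range lv).Finite := (Set.finite_lt_nat K).subset (by
      rintro _ ⟨x, rfl⟩; exact hlv x)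
    obtain ⟨_, ⟨w, rfl⟩, hmax⟩ := Set.exists_max_image (Set.range lv) id hfin ⟨_, 0, rfl⟩
    have hshift : ∀ x ∈ τ (lv w) (ce w), x + (1, 0) ∈ τ (lv w) (ce w) := by
      intro x hx
      refine key (lv w) (hlv w) (ce w) (hce w) _ (hmax _ ⟨x + (1, 0), rfl⟩) _ (hce _) _ (hmem _)
        x hx ?_
      rw [add_sub_cancel_left, pt_norm]
      norm_num
      linarith
    have hshift' : ∀ m : ℕ, ce w + ((m : ℤ), (0 : ℤ)) ∈ τ (lv w) (ce w) := by
      intro m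
      induction m with
      | zero =>
        refine (hτ (lv w) (hlv w) (ce w) (hce w)).1 _ ?_
        simpa using hh (lv w)
      | succ m ih =>
        have := hshift _ ih
        rw [add_assoc] at this
        simpa using this
    obtain ⟨m, hm⟩ := exists_nat_gt (r (lv w))
    have h1 := (hτ (lv w) (hlv w) (ce w) (hce w)).2.1 _ (hshift' m)
    rw [add_sub_cancel_left, pt_norm] at h1
    simp at h1
    linarith


/-! ### Sparse decomposition into islands -/

/-- A bound for the diameter of the level-`k` islands. -/
def scA (a L : ℕ) : ℕ → ℕ
  | 0 => a
  | k + 1 => 4 * (L * 2 ^ k * scA a L k)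

/-- The isolation distance of the level-`k` islands. -/
def scB (a L k : ℕ) : ℕ := L * 2 ^ k * scA a L k

/-- What is left of `A` when the islands of levels `< k` are removed: a point survives one more
step if there is another surviving point at a distance in `(α k, β k]`. -/
def lev (α β : ℕ → ℕ) (A : Set Pt) : ℕ → Set Pt
  | 0 => A
  | k + 1 => {x | x ∈ lev α β A k ∧ ∃ y ∈ lev α β A k, (α k : ℝ) < ‖x - y‖ ∧ ‖x - y‖ ≤ β k}

/-- Points removed at the same step form clusters of radius `α j`, more than `β j` apart; choosing
a point in each of them gives the island centres. -/
theorem exists_centres (α β : ℕ → ℕ) (h2 : ∀ k, 2 * α k ≤ β k) (A : Set Pt) (j : ℕ) :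
    ∃ C : Set Pt, (∀ c ∈ C, ∀ c' ∈ C, c ≠ c' → (β j : ℝ) < ‖c - c'‖) ∧
      ∀ x ∈ lev α β A j, x ∉ lev α β A (j + 1) → ∃ c ∈ C, ‖x - c‖ ≤ α j := by
  classical
  set D : Set Pt := {x | x ∈ lev α β A j ∧ x ∉ lev α β A (j + 1)} with hD
  have h2' : 2 * (α j : ℝ) ≤ β j := by exact_mod_cast h2 j
  have hgap : ∀ x ∈ D, ∀ y ∈ D, ‖x - y‖ ≤ β j → ‖x - y‖ ≤ α j := by
    intro x hx y hy hxy
    by_contra hlt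
    exact hx.2 ⟨hx.1, y, hy.1, not_le.1 hlt, hxy⟩
  have htrans : ∀ x ∈ D, ∀ y ∈ D, ∀ z ∈ D, ‖x - y‖ ≤ α j → ‖y - z‖ ≤ α j → ‖x - z‖ ≤ α j := by
    intro x hx y hy z hz hxy hyz
    refine hgap x hx z hz ?_
    calc ‖x - z‖ = ‖(x - y) + (y - z)‖ := by congr 1; abel
      _ ≤ ‖x - y‖ + ‖y - z‖ := norm_add_le _ _
      _ ≤ _ := by linarith
  set J : Pt → Set Pt := fun x => {y | y ∈ D ∧ ‖x - y‖ ≤ α j} with hJ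
  set c : Set Pt → Pt := fun S => if h : S.Nonempty then h.some else 0 with hc
  have hcJ : ∀ x ∈ D, c (J x) ∈ J x := by
    intro x hx
    have hne : (J x).Nonempty := ⟨x, hx, by simp⟩
    simp only [hc, dif_pos hne]
    exact hne.some_mem
  refine ⟨(fun x => c (J x)) '' D, ?_, fun x hx hx' =>
    ⟨_, ⟨x, ⟨hx, hx'⟩, rfl⟩, (hcJ x ⟨hx, hx'⟩).2⟩⟩
  rintro _ ⟨x, hx, rfl⟩ _ ⟨y, hy, rfl⟩ hne
  by_contra hle
  apply hne
  obtain ⟨h3, h4⟩ := hcJ x hx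
  obtain ⟨h5, h6⟩ := hcJ y hy
  have h7 := hgap _ h3 _ h5 (not_lt.1 hle)
  have hxy : ‖x - y‖ ≤ α j :=
    htrans x hx _ h5 y hy (htrans x hx _ h3 _ h5 h4 h7) (by rwa [norm_sub_rev])
  have hJJ : J x = J y := by
    ext z
    constructor
    · rintro ⟨hz, hxz⟩
      exact ⟨hz, htrans y hy x hx z hz (by rwa [norm_sub_rev]) hxz⟩
    · rintro ⟨hz, hyz⟩
      exact ⟨hz, htrans x hx y hy z hz hxy hyz⟩
  simp only [hJJ]

theorem scA_mono (a L : ℕ) (hL : 1 ≤ L) (k : ℕ) : a ≤ scA a L k := by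
  induction k with
  | zero => exact le_rfl
  | succ k ih =>
    refine ih.trans ?_
    have : 1 ≤ 2 ^ k := Nat.one_le_two_pow
    have : 1 ≤ L * 2 ^ k := Nat.one_le_iff_ne_zero.2 (by positivity)
    simp only [scA]
    nlinarith [Nat.zero_le (scA a L k)]

/-- With suitable scales, a set whose islands of levels `< K` exhaust it is contained in a proper
closed subset of the plane. -/
theorem exists_scales (𝒰 : Finset (Finset Pt)) (hU : UpdateFamily 𝒰) (hsub : Subcritical 𝒰) :
    ∃ a L : ℕ, 1 ≤ a ∧ 1 ≤ L ∧ ∀ (A : Set Pt) (K : ℕ), lev (scA a L) (scB a L) A K = ∅ →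
      ∃ F : Set Pt, A ⊆ F ∧ (∀ X ∈ 𝒰, ∀ x, (∀ v ∈ X, x + v ∈ F) → x ∈ F) ∧ F ≠ Set.univ := by
  obtain ⟨Us, κ, e, hκ, he0, he1, hUs, hspan, hrule⟩ := exists_directions 𝒰 hU hsub
  obtain ⟨R, hR⟩ : ∃ R : ℕ, ∀ X ∈ 𝒰, ∀ v ∈ X, ‖v‖ ≤ R := by
    obtain ⟨q, hq⟩ := ((𝒰.biUnion id).image fun v => ‖v‖).bddAbove
    obtain ⟨R, hR⟩ := exists_nat_ge q
    refine ⟨R, fun X hX v hv => (hq ?_).trans hR⟩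
    simp only [Finset.coe_image]
    exact ⟨v, by simpa using ⟨X, hX, hv⟩, rfl⟩
  obtain ⟨L, hL⟩ := exists_nat_ge ((2 + 8 / κ) * (1 + 6 / e))
  set a := 2 * (R + 1) with ha
  have hκ8 : 0 < 8 / κ := by positivity
  have he6 : 0 < 6 / e := by positivity
  have hL2 : (2 : ℝ) ≤ L := by nlinarith
  have hL1 : 1 ≤ L := by
    have : (1 : ℝ) ≤ L := by linarith
    exact_mod_cast this
  refine ⟨a, L, by omega, hL1, fun A K hK => ?_⟩
  have hLN : 2 ≤ L := by exact_mod_cast hL2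
  have hab : ∀ k, 2 * scA a L k ≤ scB a L k := fun k => by
    have : 1 ≤ 2 ^ k := Nat.one_le_two_pow
    have : 2 ≤ L * 2 ^ k := by nlinarith
    exact Nat.mul_le_mul_right _ this
  choose C hC1 hC2 using exists_centres (scA a L) (scB a L) hab A
  set h : ℕ → ℝ := fun k => scA a L k with hh
  set r : ℕ → ℝ := fun k => 4 / κ * h k with hr
  set D : ℕ → ℝ := fun k => h k + 2 * ((R : ℝ) + 1) + 2 * r k with hD
  set M : ℕ → ℝ := fun k => 6 * 2 ^ k / e * D k with hM
  have hha : ∀ k, 2 * ((R : ℝ) + 1) ≤ h k := fun k => by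
    have h1 : ((2 * (R + 1) : ℕ) : ℝ) ≤ (scA a L k : ℝ) := by
      exact_mod_cast ha ▸ scA_mono a L hL1 k
    push_cast at h1
    exact h1
  have hR0 : (0 : ℝ) ≤ R := Nat.cast_nonneg R
  have hh0 : ∀ k, 0 ≤ h k := fun k => Nat.cast_nonneg _
  have hr0 : ∀ k, 0 ≤ r k := fun k => mul_nonneg (by positivity) (hh0 k)
  have hD0 : ∀ k, 0 ≤ D k := fun k => by
    have := hh0 k; have := hr0 k
    simp only [hD]; positivity
  have hM0 : ∀ k, 0 ≤ M k := fun k => mul_nonneg (by positivity) (hD0 k)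
  have hDle : ∀ k, D k ≤ (2 + 8 / κ) * h k := fun k => by
    have : 2 * r k = 8 / κ * h k := by simp only [hr]; ring
    have := hha k
    simp only [hD]; linarith
  have hp1 : ∀ k : ℕ, (1 : ℝ) ≤ 2 ^ k := fun k => one_le_pow₀ one_le_two
  have hDM : ∀ k, D k + M k ≤ scB a L k := fun k => by
    have hpe : 1 + 6 * 2 ^ k / e ≤ (1 + 6 / e) * 2 ^ k := by
      have : 6 * 2 ^ k / e = 6 / e * 2 ^ k := by ring
      rw [this]; linarith [hp1 k]
    calc D k + M k = D k * (1 + 6 * 2 ^ k / e) := by simp only [hM]; ring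
      _ ≤ ((2 + 8 / κ) * h k) * ((1 + 6 / e) * 2 ^ k) := by
        gcongr
        exact hDle k
      _ = ((2 + 8 / κ) * (1 + 6 / e)) * (2 ^ k * h k) := by ring
      _ ≤ L * (2 ^ k * h k) := by
        apply mul_le_mul_of_nonneg_right hL
        exact mul_nonneg (by positivity) (hh0 k)
      _ = scB a L k := by simp only [scB, hh]; push_cast; ring
  have hhB : ∀ k, h k ≤ scB a L k := fun k => by
    have : (2 * scA a L k : ℝ) ≤ scB a L k := by exact_mod_cast hab k
    have := hh0 k
    simp only [hh] at this ⊢; linarith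
  have hsucc : ∀ k, h (k + 1) = 4 * scB a L k := fun k => by
    simp only [hh, scA, scB]; push_cast; ring
  obtain ⟨F, hF1, hF2, hF3⟩ := exists_closed 𝒰 Us κ e (R + 1) hκ hUs hspan hrule (by linarith)
    (fun X hX v hv => (hR X hX v hv).trans (by linarith)) C r
    (fun k => h k + 2 * ((R : ℝ) + 1) + M k) h M (fun k => scB a L k) (fun k => e / 2 ^ k)
    hr0 hh0 (by simp) (fun k => ⟨by positivity, (div_le_self he0.le (hp1 k)).trans he1⟩)
    (fun k => by
      apply div_lt_div_of_pos_left he0 (by positivity)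
      exact pow_lt_pow_right₀ one_lt_two (Nat.lt_succ_self k))
    hM0 (fun k => by
      have : (e / 2 ^ k - e / 2 ^ (k + 1)) * M k = 3 * D k := by
        simp only [hM]; field_simp; ring
      exact this.symm.le)
    (fun k => by
      have h1 := hDM k; have h2 := hhB k; have h3 := hsucc k
      have h4 := hD0 k; have h5 := hM0 k
      rw [h3]
      change h k + M k + D k ≤ _
      linarith)
    (fun k => le_rfl)
    (fun k => by simp only [hr]; field_simp; exact le_rfl)
    (fun k => by
      have h1 := hDM k
      simp only [hD] at h1
      linarith)
    hC1 K
  refine ⟨F, fun x hx => ?_, hF2, hF3⟩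
  -- the last level at which `x` survives
  have hex : ∃ k, x ∉ lev (scA a L) (scB a L) A k := ⟨K, by rw [hK]; simp⟩
  classical
  have hlast := Nat.find_spec hex
  have hle : Nat.find hex ≤ K := Nat.find_min' hex (by rw [hK]; simp)
  obtain ⟨j, hj⟩ : ∃ j, Nat.find hex = j + 1 := by
    refine Nat.exists_eq_succ_of_ne_zero fun h0 => ?_
    rw [h0] at hlast
    exact hlast hx
  have hjin := Nat.find_min hex (m := j) (by omega)
  rw [hj] at hlast
  obtain ⟨c, hc, hxc⟩ := hC2 j x (not_not.1 hjin) hlast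
  exact hF1 j (by omega) c hc x hxc

/-! ### Trees witnessing survival -/

open Classical in
/-- The possible sets of `2 ^ k` points of `A` that witness the survival of `x` to level `k`. -/
noncomputable def trees (α β : ℕ → ℕ) : ℕ → Pt → Finset (Finset Pt)
  | 0, x => {{x}}
  | k + 1, x =>
    ((Finset.Icc (x - ((β k : ℤ), (β k : ℤ))) (x + ((β k : ℤ), (β k : ℤ)))).filter
      fun y => (α k : ℝ) < ‖x - y‖ ∧ ‖x - y‖ ≤ β k).biUnion
      fun y => (trees α β k x ×ˢ trees α β k y).image fun q => q.1 ∪ q.2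

/-- An upper bound for the number of trees. -/
def treeCount (β : ℕ → ℕ) : ℕ → ℕ
  | 0 => 1
  | k + 1 => (2 * β k + 1) ^ 2 * treeCount β k ^ 2

theorem card_trees_le (α β : ℕ → ℕ) (k : ℕ) (x : Pt) :
    (trees α β k x).card ≤ treeCount β k := by
  classical
  induction k generalizing x with
  | zero => simp [trees, treeCount]
  | succ k ih =>
    simp only [trees, treeCount]
    refine (Finset.card_biUnion_le_card_mul _ _ (treeCount β k ^ 2) fun y _ => ?_).trans ?_
    · refine Finset.card_image_le.trans ?_
      rw [Finset.card_product, sq]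
      exact Nat.mul_le_mul (ih x) (ih y)
    · refine Nat.mul_le_mul_right _ ((Finset.card_filter_le _ _).trans ?_)
      rw [Finset.card_Icc_prod, Int.card_Icc, Int.card_Icc]
      simp only [Prod.fst_add, Prod.fst_sub, Prod.snd_add, Prod.snd_sub]
      have e1 : (x.1 + (β k : ℤ) + 1 - (x.1 - β k)).toNat = 2 * β k + 1 := by omega
      have e2 : (x.2 + (β k : ℤ) + 1 - (x.2 - β k)).toNat = 2 * β k + 1 := by omega
      rw [e1, e2, sq]

/-- The two subtrees at each step are disjoint, because they have radius at most `α k / 2` while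
their roots are more than `α k` apart. -/
theorem mem_trees (α β : ℕ → ℕ) (h1 : ∀ k, α k ≤ β k) (h2 : ∀ k, 4 * β k ≤ α (k + 1)) (k : ℕ)
    (x : Pt) (S : Finset Pt) (hS : S ∈ trees α β k x) :
    S.card = 2 ^ k ∧ ∀ s ∈ S, 2 * ‖x - s‖ ≤ α k := by
  classical
  induction k generalizing x S with
  | zero =>
    simp only [trees, Finset.mem_singleton] at hS
    subst hS
    simp
  | succ k ih =>
    simp only [trees, Finset.mem_biUnion, Finset.mem_filter, Finset.mem_image,
      Finset.mem_product] at hS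
    obtain ⟨y, ⟨-, hy1, hy2⟩, ⟨S1, S2⟩, ⟨hS1, hS2⟩, rfl⟩ := hS
    obtain ⟨c1, r1⟩ := ih x S1 hS1
    obtain ⟨c2, r2⟩ := ih y S2 hS2
    have h1' : (α k : ℝ) ≤ β k := by exact_mod_cast h1 k
    have h2' : 4 * (β k : ℝ) ≤ α (k + 1) := by exact_mod_cast h2 k
    have hα : (0 : ℝ) ≤ α k := Nat.cast_nonneg _
    refine ⟨?_, fun s hs => ?_⟩
    · rw [Finset.card_union_of_disjoint, c1, c2, pow_succ]
      · ring
      · refine Finset.disjoint_left.2 fun s hs1 hs2 => ?_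
        have : ‖x - y‖ ≤ ‖x - s‖ + ‖y - s‖ := by
          calc ‖x - y‖ = ‖(x - s) - (y - s)‖ := by congr 1; abel
            _ ≤ _ := norm_sub_le _ _
        linarith [r1 s hs1, r2 s hs2]
    · rcases Finset.mem_union.1 hs with hs | hs
      · linarith [r1 s hs]
      · have : ‖x - s‖ ≤ ‖x - y‖ + ‖y - s‖ := by
          calc ‖x - s‖ = ‖(x - y) + (y - s)‖ := by congr 1; abel
            _ ≤ _ := norm_add_le _ _
        linarith [r2 s hs]

theorem exists_tree (α β : ℕ → ℕ) (A : Set Pt) (k : ℕ) (x : Pt) (hx : x ∈ lev α β A k) :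
    ∃ S ∈ trees α β k x, ∀ s ∈ S, s ∈ A := by
  classical
  induction k generalizing x with
  | zero => exact ⟨{x}, by simp [trees],
      fun s hs => by rw [Finset.mem_singleton.1 hs]; exact hx⟩
  | succ k ih =>
    obtain ⟨hx, y, hy, hy1, hy2⟩ := hx
    obtain ⟨S1, hS1, hA1⟩ := ih x hx
    obtain ⟨S2, hS2, hA2⟩ := ih y hy
    refine ⟨S1 ∪ S2, ?_, fun s hs => ?_⟩
    · simp only [trees, Finset.mem_biUnion, Finset.mem_filter, Finset.mem_image,
        Finset.mem_product]
      refine ⟨y, ⟨?_, hy1, hy2⟩, (S1, S2), ⟨hS1, hS2⟩, rfl⟩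
      rw [pt_norm] at hy2
      obtain ⟨h3, h4⟩ := max_le_iff.1 hy2
      simp only [Prod.fst_sub, Prod.snd_sub] at h3 h4
      have h3' : |x.1 - y.1| ≤ (β k : ℤ) := by exact_mod_cast h3
      have h4' : |x.2 - y.2| ≤ (β k : ℤ) := by exact_mod_cast h4
      rw [abs_le] at h3' h4'
      rw [Finset.mem_Icc, Prod.le_def, Prod.le_def]
      simp only [Prod.fst_add, Prod.fst_sub, Prod.snd_add, Prod.snd_sub]
      omega
    · rcases Finset.mem_union.1 hs with hs | hs
      · exact hA1 s hs
      · exact hA2 s hs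

theorem lev_translate (α β : ℕ → ℕ) (A : Set Pt) (q : Pt) (hq : ∀ x, x ∈ A → x + q ∈ A) (k : ℕ)
    (x : Pt) (hx : x ∈ lev α β A k) : x + q ∈ lev α β A k := by
  induction k generalizing x with
  | zero => exact hq x hx
  | succ k ih =>
    obtain ⟨hx, y, hy, h⟩ := hx
    exact ⟨ih x hx, y + q, ih y hy, by rwa [add_sub_add_right_eq_sub]⟩


/-! ### The torus -/

theorem torusProj_add (n : ℕ) (x v : Pt) :
    torusProj n (x + v) = torusProj n x + torusProj n v := by
  simp [torusProj]

theorem closure_ne_univ (n : ℕ) (𝒰 : Finset (Finset Pt)) (A : Set (ZMod n × ZMod n)) (F : Set Pt)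
    (hA : {x | torusProj n x ∈ A} ⊆ F) (hF : ∀ X ∈ 𝒰, ∀ x, (∀ v ∈ X, x + v ∈ F) → x ∈ F)
    (hne : F ≠ Set.univ) : torusClosure n 𝒰 A ≠ Set.univ := by
  have key : ∀ t, ∀ x : Pt, torusProj n x ∈ torusIter n 𝒰 t A → x ∈ F := by
    intro t
    induction t with
    | zero => exact fun x hx => hA hx
    | succ t ih =>
      rintro x (hx | ⟨X, hX, h⟩)
      · exact ih x hx
      · exact hF X hX x fun v hv => ih _ (by rw [torusProj_add]; exact h v hv)
  intro huniv
  refine hne (Set.eq_univ_of_forall fun x => ?_)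
  have : torusProj n x ∈ torusClosure n 𝒰 A := by rw [huniv]; trivial
  obtain ⟨t, ht⟩ := Set.mem_iUnion.1 this
  exact key t x ht

/-- The Bernoulli weight of a configuration. -/
def bweight {V : Type*} [Fintype V] (p : ℝ) (ω : V → Bool) : ℝ :=
  p ^ (Finset.univ.filter (fun x => ω x = true)).card *
    (1 - p) ^ (Finset.univ.filter (fun x => ω x = false)).card

theorem bweight_eq {V : Type*} [Fintype V] (p : ℝ) (ω : V → Bool) :
    bweight p ω = ∏ v, (if ω v = true then p else 1 - p) := by
  rw [Finset.prod_ite, Finset.prod_const, Finset.prod_const, bweight]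
  simp

theorem sum_bweight {V : Type*} [Fintype V] [DecidableEq V] (p : ℝ) (D : Finset V) :
    ∑ ω : V → Bool, (if ∀ v ∈ D, ω v = true then bweight p ω else 0) = p ^ D.card := by
  have h1 : ∀ ω : V → Bool, (if ∀ v ∈ D, ω v = true then bweight p ω else 0) =
      ∏ v, (if ω v = true then p else if v ∈ D then 0 else 1 - p) := by
    intro ω
    split_ifs with h
    · rw [bweight_eq]
      refine Finset.prod_congr rfl fun v _ => ?_
      by_cases hv : ω v = true
      · simp [hv]
      · have : v ∉ D := fun hD => hv (h v hD)
        simp [hv, this]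
    · push Not at h
      obtain ⟨v, hv, hω⟩ := h
      symm
      refine Finset.prod_eq_zero (Finset.mem_univ v) ?_
      simp [hω, hv]
  rw [Finset.sum_congr rfl fun ω _ => h1 ω]
  have h2 := Finset.prod_univ_sum (fun _ : V => (Finset.univ : Finset Bool))
    (fun v b => if b = true then p else if v ∈ D then 0 else 1 - p)
  rw [Fintype.piFinset_univ] at h2
  rw [← h2]
  have h3 : ∀ v : V, ∑ b : Bool, (if b = true then p else if v ∈ D then 0 else 1 - p) =
      if v ∈ D then p else 1 := by
    intro v
    rw [Fintype.sum_bool]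
    by_cases hv : v ∈ D <;> simp [hv]
  rw [Finset.prod_congr rfl fun v _ => h3 v, Finset.prod_ite]
  simp

theorem bweight_nonneg {V : Type*} [Fintype V] (p : ℝ) (hp : p ∈ Set.Icc (0 : ℝ) 1)
    (ω : V → Bool) : 0 ≤ bweight p ω :=
  mul_nonneg (pow_nonneg hp.1 _) (pow_nonneg (sub_nonneg.2 hp.2) _)

/-- A configuration that percolates contains the projection of a tree of level `K` rooted in a
fundamental domain. The projection is injective on trees, since their diameter is less than `n`, so
a union bound applies. -/
theorem percProb_le (𝒰 : Finset (Finset Pt)) (a L : ℕ) (hL : 1 ≤ L)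
    (hsc : ∀ (A : Set Pt) (K : ℕ), lev (scA a L) (scB a L) A K = ∅ →
      ∃ F : Set Pt, A ⊆ F ∧ (∀ X ∈ 𝒰, ∀ x, (∀ v ∈ X, x + v ∈ F) → x ∈ F) ∧ F ≠ Set.univ)
    (n K : ℕ) (hn : scA a L K < n) (p : ℝ) (hp : p ∈ Set.Icc (0 : ℝ) 1) :
    percProb n 𝒰 p ≤ (n : ℝ) ^ 2 * treeCount (scB a L) K * p ^ (2 ^ K) := by
  classical
  have hn0 : n ≠ 0 := by omega
  have : NeZero n := ⟨hn0⟩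
  set α := scA a L with hα
  set β := scB a L with hβ
  have h1 : ∀ k, α k ≤ β k := fun k => by
    have : 1 ≤ L * 2 ^ k := Nat.one_le_iff_ne_zero.2 (by positivity)
    exact Nat.le_mul_of_pos_left _ this
  have h2 : ∀ k, 4 * β k ≤ α (k + 1) := fun k => le_rfl
  set box : Finset Pt := Finset.Ico (0 : ℤ) n ×ˢ Finset.Ico (0 : ℤ) n with hbox
  have hinj : ∀ x, ∀ S ∈ trees α β K x, (S.image (torusProj n)).card = 2 ^ K := by
    intro x S hS
    obtain ⟨hc, hr⟩ := mem_trees α β h1 h2 K x S hS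
    rw [Finset.card_image_of_injOn, hc]
    intro s hs t ht hst
    have hd : ‖s - t‖ < n := by
      have h3 := hr s hs
      have h4 := hr t ht
      have h5 : ‖s - t‖ ≤ ‖x - s‖ + ‖x - t‖ := by
        calc ‖s - t‖ = ‖(x - t) - (x - s)‖ := by congr 1; abel
          _ ≤ ‖x - t‖ + ‖x - s‖ := norm_sub_le _ _
          _ = _ := add_comm _ _
      have h6 : (α K : ℝ) < n := by exact_mod_cast hn
      linarith
    rw [pt_norm] at hd
    obtain ⟨h3, h4⟩ := max_lt_iff.1 hd
    simp only [Prod.fst_sub, Prod.snd_sub] at h3 h4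
    have h3' : |s.1 - t.1| < (n : ℤ) := by exact_mod_cast h3
    have h4' : |s.2 - t.2| < (n : ℤ) := by exact_mod_cast h4
    simp only [torusProj, Prod.mk.injEq] at hst
    have h5 := (ZMod.intCast_eq_intCast_iff_dvd_sub t.1 s.1 n).1 hst.1.symm
    have h6 := (ZMod.intCast_eq_intCast_iff_dvd_sub t.2 s.2 n).1 hst.2.symm
    have h7 := Int.eq_zero_of_abs_lt_dvd h5 h3'
    have h8 := Int.eq_zero_of_abs_lt_dvd h6 h4'
    exact Prod.ext (by omega) (by omega)
  have hwit : ∀ ω : ZMod n × ZMod n → Bool, torusClosure n 𝒰 {x | ω x = true} = Set.univ →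
      ∃ x ∈ box, ∃ S ∈ trees α β K x, ∀ v ∈ S.image (torusProj n), ω v = true := by
    intro ω hω
    set A : Set Pt := {x | torusProj n x ∈ {x | ω x = true}} with hA
    have hne : (lev α β A K).Nonempty := by
      rw [Set.nonempty_iff_ne_empty]
      intro h0
      obtain ⟨F, hF1, hF2, hF3⟩ := hsc A K h0
      exact closure_ne_univ n 𝒰 _ F hF1 hF2 hF3 hω
    obtain ⟨x, hx⟩ := hne
    set q : Pt := (-(n : ℤ) * (x.1 / n), -(n : ℤ) * (x.2 / n)) with hq
    have hqA : ∀ y, y ∈ A → y + q ∈ A := by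
      intro y hy
      have : torusProj n (y + q) = torusProj n y := by
        rw [torusProj_add]
        simp [torusProj, hq]
      simp only [hA, Set.mem_ofPred_eq, this]
      exact hy
    obtain ⟨S, hS, hSA⟩ := exists_tree α β A K _ (lev_translate α β A q hqA K x hx)
    refine ⟨x + q, ?_, S, hS, fun v hv => ?_⟩
    · have hnp : (0 : ℤ) < n := by exact_mod_cast Nat.pos_of_ne_zero hn0
      have m1 := Int.emod_add_mul_ediv x.1 n
      have m2 := Int.emod_add_mul_ediv x.2 n
      have m3 := Int.emod_nonneg x.1 hnp.ne'
      have m4 := Int.emod_nonneg x.2 hnp.ne'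
      have m5 := Int.emod_lt_of_pos x.1 hnp
      have m6 := Int.emod_lt_of_pos x.2 hnp
      simp only [hbox, hq, Finset.mem_product, Finset.mem_Ico, Prod.fst_add, Prod.snd_add, neg_mul]
      refine ⟨⟨?_, ?_⟩, ?_, ?_⟩ <;> linarith
    · obtain ⟨s, hs, rfl⟩ := Finset.mem_image.1 hv
      exact hSA s hs
  have hterm : ∀ ω : ZMod n × ZMod n → Bool,
      (if torusClosure n 𝒰 {x | ω x = true} = Set.univ then (1 : ℝ) else 0) *
        p ^ (Finset.univ.filter (fun x => ω x = true)).card *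
        (1 - p) ^ (Finset.univ.filter (fun x => ω x = false)).card ≤
      ∑ x ∈ box, ∑ S ∈ trees α β K x,
        (if ∀ v ∈ S.image (torusProj n), ω v = true then bweight p ω else 0) := by
    intro ω
    have hnn : ∀ x ∈ box, ∀ S ∈ trees α β K x,
        0 ≤ (if ∀ v ∈ S.image (torusProj n), ω v = true then bweight p ω else 0) := by
      intro x _ S _
      split_ifs
      · exact bweight_nonneg p hp ω
      · exact le_rfl
    rw [mul_assoc]
    change _ * bweight p ω ≤ _
    by_cases hω : torusClosure n 𝒰 {x | ω x = true} = Set.univ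
    · rw [if_pos hω, one_mul]
      obtain ⟨x, hx, S, hS, hv⟩ := hwit ω hω
      calc bweight p ω
          = (if ∀ v ∈ S.image (torusProj n), ω v = true then bweight p ω else 0) := by
            rw [if_pos hv]
        _ ≤ ∑ S ∈ trees α β K x,
            (if ∀ v ∈ S.image (torusProj n), ω v = true then bweight p ω else 0) :=
          Finset.single_le_sum (f := fun S : Finset Pt =>
            (if ∀ v ∈ S.image (torusProj n), ω v = true then bweight p ω else 0))
            (hnn x hx) hS
        _ ≤ _ := Finset.single_le_sum (f := fun x => ∑ S ∈ trees α β K x,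
            (if ∀ v ∈ S.image (torusProj n), ω v = true then bweight p ω else 0))
            (fun x hx => Finset.sum_nonneg (hnn x hx)) hx
    · rw [if_neg hω, zero_mul]
      exact Finset.sum_nonneg fun x hx => Finset.sum_nonneg (hnn x hx)
  have hperc : percProb n 𝒰 p ≤ ∑ ω : ZMod n × ZMod n → Bool, ∑ x ∈ box, ∑ S ∈ trees α β K x,
        (if ∀ v ∈ S.image (torusProj n), ω v = true then bweight p ω else 0) := by
    rw [percProb, dif_neg hn0]
    refine le_trans (le_of_eq ?_) (Finset.sum_le_sum fun ω _ => hterm ω)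
    refine Finset.sum_congr rfl fun ω _ => ?_
    congr!
  refine hperc.trans ?_
  rw [Finset.sum_comm]
  have hpK : 0 ≤ p ^ (2 ^ K) := pow_nonneg hp.1 _
  calc ∑ x ∈ box, ∑ ω : ZMod n × ZMod n → Bool, ∑ S ∈ trees α β K x,
        (if ∀ v ∈ S.image (torusProj n), ω v = true then bweight p ω else 0)
      = ∑ x ∈ box, ∑ S ∈ trees α β K x, p ^ (2 ^ K) := by
        refine Finset.sum_congr rfl fun x _ => ?_
        rw [Finset.sum_comm]
        refine Finset.sum_congr rfl fun S hS => ?_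
        rw [sum_bweight, hinj x S hS]
    _ ≤ ∑ x ∈ box, treeCount β K * p ^ (2 ^ K) := by
        refine Finset.sum_le_sum fun x _ => ?_
        rw [Finset.sum_const, nsmul_eq_mul]
        refine mul_le_mul_of_nonneg_right ?_ hpK
        exact_mod_cast card_trees_le α β K x
    _ = _ := by
        rw [Finset.sum_const, nsmul_eq_mul, hbox, Finset.card_product, Int.card_Ico]
        simp
        ring

theorem scA_le (a L : ℕ) (ha : 1 ≤ a) (hL : 1 ≤ L) (k : ℕ) :
    scA a L (k + 1) ≤ (8 * L * a) ^ ((k + 1) ^ 2) := by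
  have hY1 : 1 ≤ 8 * L * a := Nat.one_le_iff_ne_zero.2 (by positivity)
  have hY2 : 2 ≤ 8 * L * a := by nlinarith [Nat.mul_le_mul hL ha]
  have hY4 : 4 * L ≤ 8 * L * a := by nlinarith
  induction k with
  | zero => simp [scA]; nlinarith
  | succ k ih =>
    set Y := 8 * L * a with hY
    calc scA a L (k + 1 + 1) = 4 * L * 2 ^ (k + 1) * scA a L (k + 1) := by
          rw [scA]; ring
      _ ≤ Y * Y ^ (k + 1) * Y ^ ((k + 1) ^ 2) := by gcongr
      _ = Y ^ (k + 2 + (k + 1) ^ 2) := by ring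
      _ ≤ Y ^ ((k + 1 + 1) ^ 2) := Nat.pow_le_pow_right hY1 (by nlinarith)

/-- The number of trees, times the square of the next scale, is at most singly exponential in
the number `2 ^ k` of points of a tree. The exponent `k² + 4k + 6` is chosen so that
`(k + 1)² + ((k + 1)² + 4(k + 1) + 6) = 2(k² + 4k + 6)`. -/
theorem treeCount_le (a L : ℕ) (ha : 1 ≤ a) (hL : 1 ≤ L) (k : ℕ) :
    treeCount (scB a L) k * ((8 * L * a) ^ 2) ^ (k ^ 2 + 4 * k + 6) ≤
      (((8 * L * a) ^ 2) ^ 6) ^ (2 ^ k) := by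
  induction k with
  | zero => simp [treeCount]
  | succ k ih =>
    have hB : (2 * scB a L k + 1) ^ 2 ≤ ((8 * L * a) ^ 2) ^ ((k + 1) ^ 2) := by
      have h1 : 1 ≤ scB a L k := by
        have := ha.trans (scA_mono a L hL k)
        exact Nat.one_le_iff_ne_zero.2 (by unfold scB; positivity)
      rw [pow_right_comm (8 * L * a) 2]
      refine Nat.pow_le_pow_left (le_trans ?_ (scA_le a L ha hL k)) 2
      change _ ≤ 4 * scB a L k
      omega
    set W := (8 * L * a) ^ 2 with hW
    calc treeCount (scB a L) (k + 1) * W ^ ((k + 1) ^ 2 + 4 * (k + 1) + 6)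
        = (2 * scB a L k + 1) ^ 2 * treeCount (scB a L) k ^ 2 *
            W ^ ((k + 1) ^ 2 + 4 * (k + 1) + 6) := by rw [treeCount]
      _ ≤ W ^ ((k + 1) ^ 2) * treeCount (scB a L) k ^ 2 *
            W ^ ((k + 1) ^ 2 + 4 * (k + 1) + 6) := by gcongr
      _ = (treeCount (scB a L) k * W ^ (k ^ 2 + 4 * k + 6)) ^ 2 := by ring
      _ ≤ ((W ^ 6) ^ (2 ^ k)) ^ 2 := Nat.pow_le_pow_left ih 2
      _ = (W ^ 6) ^ (2 ^ (k + 1)) := by ring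

theorem scA_strictMono (a L : ℕ) (ha : 1 ≤ a) (hL : 1 ≤ L) : StrictMono (scA a L) := by
  refine strictMono_nat_of_lt_succ fun k => ?_
  have h0 : 1 ≤ scA a L k := ha.trans (scA_mono a L hL k)
  have h1 : 1 ≤ L * 2 ^ k := Nat.one_le_iff_ne_zero.2 (by positivity)
  simp only [scA]
  nlinarith

theorem percProb_lt (𝒰 : Finset (Finset Pt)) (a L : ℕ) (ha : 1 ≤ a) (hL : 1 ≤ L)
    (hsc : ∀ (A : Set Pt) (K : ℕ), lev (scA a L) (scB a L) A K = ∅ →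
      ∃ F : Set Pt, A ⊆ F ∧ (∀ X ∈ 𝒰, ∀ x, (∀ v ∈ X, x + v ∈ F) → x ∈ F) ∧ F ≠ Set.univ)
    (n : ℕ) (hn : a < n) (p : ℝ) (hp0 : 0 ≤ p) (hp : p ≤ 1 / (4 * (((8 * L * a : ℕ) : ℝ) ^ 2) ^ 6)) :
    percProb n 𝒰 p < 1 / 2 := by
  have hY1 : 1 ≤ 8 * L * a := Nat.one_le_iff_ne_zero.2 (by positivity)
  have hY1' : (1 : ℝ) ≤ ((8 * L * a : ℕ) : ℝ) := by exact_mod_cast hY1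
  -- the scale just below `n`
  obtain ⟨K, hK1, hK2⟩ : ∃ K, scA a L K < n ∧ n ≤ scA a L (K + 1) := by
    have hex : ∃ k, n ≤ scA a L k := ⟨n, (scA_strictMono a L ha hL).le_apply⟩
    obtain ⟨K, hK⟩ : ∃ K, Nat.find hex = K + 1 := by
      refine Nat.exists_eq_succ_of_ne_zero fun h0 => ?_
      have := Nat.find_spec hex
      rw [h0, scA] at this
      omega
    refine ⟨K, not_le.1 (Nat.find_min hex (by omega)), ?_⟩
    rw [← hK]
    exact Nat.find_spec hex
  have hp1 : p ≤ 1 := by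
    refine hp.trans ((div_le_one (by positivity)).2 ?_)
    have : (1 : ℝ) ≤ (((8 * L * a : ℕ) : ℝ) ^ 2) ^ 6 := one_le_pow₀ (one_le_pow₀ hY1')
    linarith
  have h1 := percProb_le 𝒰 a L hL hsc n K hK1 p ⟨hp0, hp1⟩
  have h2 : n ^ 2 * treeCount (scB a L) K ≤ (((8 * L * a) ^ 2) ^ 6) ^ (2 ^ K) := by
    refine le_trans ?_ (treeCount_le a L ha hL K)
    rw [mul_comm]
    refine Nat.mul_le_mul_left _ ?_
    calc n ^ 2 ≤ ((8 * L * a) ^ ((K + 1) ^ 2)) ^ 2 :=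
          Nat.pow_le_pow_left (hK2.trans (scA_le a L ha hL K)) 2
      _ = ((8 * L * a) ^ 2) ^ ((K + 1) ^ 2) := pow_right_comm _ _ _
      _ ≤ _ := Nat.pow_le_pow_right (Nat.one_le_pow _ _ hY1) (by nlinarith)
  have h3 : (n : ℝ) ^ 2 * treeCount (scB a L) K ≤
      ((((8 * L * a : ℕ) : ℝ) ^ 2) ^ 6) ^ (2 ^ K) := by exact_mod_cast h2
  set Z : ℝ := (((8 * L * a : ℕ) : ℝ) ^ 2) ^ 6 with hZ
  have hZ0 : 0 < Z := by positivity
  have h4 : Z * p ≤ 1 / 4 := by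
    calc Z * p ≤ Z * (1 / (4 * Z)) := by gcongr
      _ = 1 / 4 := by field_simp
  calc percProb n 𝒰 p ≤ (n : ℝ) ^ 2 * treeCount (scB a L) K * p ^ (2 ^ K) := h1
    _ ≤ Z ^ (2 ^ K) * p ^ (2 ^ K) := by gcongr
    _ = (Z * p) ^ (2 ^ K) := by rw [mul_pow]
    _ ≤ (1 / 4) ^ (2 ^ K) := by gcongr
    _ ≤ (1 / 4) ^ 1 :=
        pow_le_pow_of_le_one (by norm_num) (by norm_num) Nat.one_le_two_pow
    _ < 1 / 2 := by norm_num

theorem percProb_one (n : ℕ) (hn : n ≠ 0) (𝒰 : Finset (Finset Pt)) : 1 / 2 ≤ percProb n 𝒰 1 := by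
  have : NeZero n := ⟨hn⟩
  rw [percProb, dif_neg hn]
  have huniv : torusClosure n 𝒰 {x | (fun _ => true : ZMod n × ZMod n → Bool) x = true} =
      Set.univ :=
    Set.eq_univ_of_forall fun x => Set.mem_iUnion.2 ⟨0, by simp [torusIter]⟩
  refine le_trans ?_ (Finset.single_le_sum (fun ω _ => ?_)
    (Finset.mem_univ (fun _ => true : ZMod n × ZMod n → Bool)))
  · rw [if_pos huniv]
    norm_num
  · refine mul_nonneg (mul_nonneg ?_ (by simp)) (by rw [sub_self]; exact pow_nonneg le_rfl _)
    split_ifs <;> norm_num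

/-- for subcritical families the critical probability is bounded away from 0. -/
theorem stmt12 (𝒰 : Finset (Finset Pt)) (hU : UpdateFamily 𝒰) (hsub : Subcritical 𝒰) :
    0 < Filter.liminf (fun n : ℕ => pCrit n 𝒰) Filter.atTop := by
  obtain ⟨a, L, ha, hL, hsc⟩ := exists_scales 𝒰 hU hsub
  have hY1 : 1 ≤ 8 * L * a := Nat.one_le_iff_ne_zero.2 (by positivity)
  have hY1' : (1 : ℝ) ≤ ((8 * L * a : ℕ) : ℝ) := by exact_mod_cast hY1
  set p₀ : ℝ := 1 / (4 * (((8 * L * a : ℕ) : ℝ) ^ 2) ^ 6) with hp₀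
  have hpos : 0 < p₀ := by positivity
  have hmem : ∀ n : ℕ, n ≠ 0 → (1 : ℝ) ∈ {p : ℝ | p ∈ Set.Icc (0 : ℝ) 1 ∧ 1 / 2 ≤ percProb n 𝒰 p} :=
    fun n hn => ⟨⟨zero_le_one, le_rfl⟩, percProb_one n hn 𝒰⟩
  refine hpos.trans_le (Filter.le_liminf_of_le ?_ ?_)
  · refine Filter.IsBoundedUnder.isCoboundedUnder_ge ⟨1, ?_⟩
    rw [Filter.eventually_map]
    filter_upwards [Filter.eventually_gt_atTop 0] with n hn
    exact csInf_le ⟨0, fun p hp => hp.1.1⟩ (hmem n hn.ne')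
  · filter_upwards [Filter.eventually_gt_atTop a] with n hn
    refine le_csInf ⟨1, hmem n (by omega)⟩ fun p hp => ?_
    by_contra hlt
    exact absurd (percProb_lt 𝒰 a L ha hL hsc n hn p hp.1.1 (not_le.1 hlt).le) (not_lt.2 hp.2)
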